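/- Let K : ℝ^d → ℝ satisfy |K(t)| ≤ C_0/(1 + ‖t‖_∞^{d+1}) for all t ∈ ℝ^d, for some constant C_0 < ∞. Let (v_i) be pairwise distinct elements of ℤ^d, let x_i ∈ [−1,1]^d, and let ε ∈ (−1/2, 1/2). Then for every n ∈ ℕ and every c ∈ ℝ^n, |Σ_{i=1}^n Σ_{j=1}^n c_i c_j K(v_i − v_j + ε(x_i − x_j))| ≤ (|K(0)| + C_0 · 2^d · d · Σ_{j ∈ ℕ} (j + 3/2)^{d−1}/(1 + j^{d+1})) · Σ_{i=1}^n c_i². In particular, the eigenvalues of the symmetric matrix (K(v_i − v_j + ε(x_i − x_j)))_{1 ≤ i,j ≤ n} are bounded in absolute value by this constant, uniformly in n, the grid points, the perturbations x, and ε. -/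

import Mathlib

/-!
A Schur-type test bounds the quadratic form of a (not necessarily symmetric) matrix by the largest
absolute row or column sum, since `|cᵢ cⱼ| ≤ (cᵢ² + cⱼ²) / 2`; so it is enough to bound each such sum
(`abs_quadForm_le`). The diagonal entry contributes `|K 0|`. For the rest, the perturbation
`ε (xᵢ - xⱼ)` has sup norm at most `1`, so an entry whose integer part has sup norm `m + 1` is at most
`C₀ / (1 + m^(d+1))`. There are `(2m+3)^d - (2m+1)^d ≤ 2^d d (m+3/2)^(d-1)` lattice points of sup norm
`m + 1` (`card_shell_le`), and each one is used at most once because the `vᵢ` are distinct. Summing over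
`m` gives the series (`sum_abs_le`), which converges by comparison with `∑ 1 / (m+1)²`.
-/

/-- The lattice points of `ℤ^d` of sup norm exactly `m + 1`, as a difference of two boxes. -/
noncomputable def shell (d m : ℕ) : Finset (Fin d → ℤ) :=
  (Fintype.piFinset fun _ => Finset.Icc (-((m : ℤ) + 1)) ((m : ℤ) + 1)) \
    Fintype.piFinset fun _ => Finset.Icc (-(m : ℤ)) (m : ℤ)

lemma pow_sub_pow_le_mul {x y : ℝ} (hy : 0 ≤ y) (hxy : y ≤ x) (d : ℕ) :
    x ^ d - y ^ d ≤ d * (x - y) * x ^ (d - 1) := by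
  have h := (Commute.all x y).mul_geom_sum₂ d
  rw [← h, mul_comm (d : ℝ), mul_assoc]
  refine mul_le_mul_of_nonneg_left ?_ (sub_nonneg.2 hxy)
  calc ∑ i ∈ Finset.range d, x ^ i * y ^ (d - 1 - i)
      ≤ ∑ i ∈ Finset.range d, x ^ (d - 1) := by
        refine Finset.sum_le_sum fun i hi => ?_
        have hi' : i ≤ d - 1 := by have := Finset.mem_range.1 hi; omega
        have hx : 0 ≤ x := hy.trans hxy
        calc x ^ i * y ^ (d - 1 - i) ≤ x ^ i * x ^ (d - 1 - i) := by gcongr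
          _ = x ^ (d - 1) := by rw [← pow_add]; congr 1; omega
    _ = d * x ^ (d - 1) := by simp

lemma card_shell_le {d : ℕ} (hd : 1 ≤ d) (m : ℕ) :
    ((shell d m).card : ℝ) ≤ 2 ^ d * d * ((m : ℝ) + 3 / 2) ^ (d - 1) := by
  have hsub : (Fintype.piFinset fun _ : Fin d => Finset.Icc (-(m : ℤ)) (m : ℤ)) ⊆
      Fintype.piFinset fun _ : Fin d => Finset.Icc (-((m : ℤ) + 1)) ((m : ℤ) + 1) :=
    Fintype.piFinset_subset _ _ fun _ => Finset.Icc_subset_Icc (by omega) (by omega)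
  have h1 : (((m : ℤ) + 1) + 1 - (-((m : ℤ) + 1))).toNat = 2 * m + 3 := by omega
  have h2 : ((m : ℤ) + 1 - (-(m : ℤ))).toNat = 2 * m + 1 := by omega
  rw [shell, Finset.cast_card_sdiff hsub]
  simp only [Fintype.card_piFinset_const, Int.card_Icc, h1, h2]
  push_cast
  have h := pow_sub_pow_le_mul (x := 2 * (m : ℝ) + 3) (y := 2 * (m : ℝ) + 1)
    (by positivity) (by linarith) d
  refine h.trans (le_of_eq ?_)
  have h3 : 2 * (m : ℝ) + 3 = 2 * ((m : ℝ) + 3 / 2) := by ring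
  obtain ⟨e, rfl⟩ : ∃ e, d = e + 1 := ⟨d - 1, by omega⟩
  rw [h3, mul_pow, Nat.add_sub_cancel, pow_succ]
  ring

lemma summable_series (d : ℕ) (hd : 1 ≤ d) :
    Summable fun j : ℕ => ((j : ℝ) + 3 / 2) ^ (d - 1) / (1 + (j : ℝ) ^ (d + 1)) := by
  have hs : Summable fun j : ℕ => (3 / 2 : ℝ) ^ (d - 1) * 2 ^ d * (1 / ((j : ℝ) + 1) ^ 2) := by
    refine Summable.mul_left _ ?_
    simpa using (summable_nat_add_iff 1).2 (Real.summable_one_div_nat_pow.2 one_lt_two)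
  refine Summable.of_nonneg_of_le (fun j => by positivity) (fun j => ?_) hs
  rw [mul_one_div, div_le_div_iff₀ (by positivity) (by positivity)]
  have h1 : ((j : ℝ) + 3 / 2) ^ (d - 1) ≤ (3 / 2 * ((j : ℝ) + 1)) ^ (d - 1) := by
    gcongr
    have : (0 : ℝ) ≤ j := Nat.cast_nonneg j
    linarith
  have h2 : ((j : ℝ) + 1) ^ (d + 1) ≤ 2 ^ d * (1 + (j : ℝ) ^ (d + 1)) := by
    have := add_pow_le (Nat.cast_nonneg (α := ℝ) j) zero_le_one (d + 1)
    simpa [add_comm] using this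
  calc ((j : ℝ) + 3 / 2) ^ (d - 1) * ((j : ℝ) + 1) ^ 2
      ≤ (3 / 2 * ((j : ℝ) + 1)) ^ (d - 1) * ((j : ℝ) + 1) ^ 2 := by gcongr
    _ = (3 / 2 : ℝ) ^ (d - 1) * ((j : ℝ) + 1) ^ (d + 1) := by
        rw [mul_pow, mul_assoc, ← pow_add]; congr 2; omega
    _ ≤ (3 / 2 : ℝ) ^ (d - 1) * (2 ^ d * (1 + (j : ℝ) ^ (d + 1))) := by gcongr
    _ = _ := by ring

/-- Every nonzero lattice point lies in a shell, and moving it by at most `1` in sup norm leaves a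
point of norm at least the index of that shell. -/
lemma exists_shell {d : ℕ} {w : Fin d → ℤ} (hw : w ≠ 0) :
    ∃ m : ℕ, w ∈ shell d m ∧
      ∀ t : Fin d → ℝ, (∀ k, |t k - w k| ≤ 1) → (m : ℝ) ≤ ‖t‖ := by
  obtain ⟨k₀, hk₀⟩ := Function.ne_iff.1 hw
  obtain ⟨k, -, hk⟩ := Finset.exists_max_image Finset.univ (fun k => (w k).natAbs)
    ⟨k₀, Finset.mem_univ _⟩
  have hpos : 1 ≤ (w k).natAbs := by
    have := hk k₀ (Finset.mem_univ _)
    simp only [Pi.zero_apply] at hk₀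
    omega
  refine ⟨(w k).natAbs - 1, ?_, fun t ht => ?_⟩
  · simp only [shell, Finset.mem_sdiff, Fintype.mem_piFinset, Finset.mem_Icc, not_forall]
    refine ⟨fun l => ?_, k, ?_⟩
    · have := hk l (Finset.mem_univ _)
      omega
    · omega
  · have h1 : |(w k : ℝ)| ≤ |t k| + 1 := by
      have := abs_sub_abs_le_abs_sub (w k : ℝ) (t k)
      have := ht k
      rw [abs_sub_comm] at this
      linarith
    have h2 : |t k| ≤ ‖t‖ := norm_le_pi_norm t k
    rw [Nat.cast_sub hpos, Nat.cast_natAbs, Int.cast_abs]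
    push_cast
    linarith

/-- The summability lemma: the sum of `|K|` over distinct nonzero lattice points, each moved by at
most `1` in sup norm, is bounded by the series. -/
lemma sum_abs_le {d : ℕ} (hd : 1 ≤ d) {K : (Fin d → ℝ) → ℝ} {C₀ : ℝ}
    (hK : ∀ t, |K t| ≤ C₀ / (1 + ‖t‖ ^ (d + 1))) {ι : Type*} (s : Finset ι)
    (w : ι → Fin d → ℤ) (hw : Function.Injective w) (hw0 : ∀ i ∈ s, w i ≠ 0)
    (t : ι → Fin d → ℝ) (ht : ∀ i k, |t i k - w i k| ≤ 1) :
    ∑ i ∈ s, |K (t i)| ≤ C₀ * 2 ^ d * d *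
      ∑' j : ℕ, ((j : ℝ) + 3 / 2) ^ (d - 1) / (1 + (j : ℝ) ^ (d + 1)) := by
  classical
  have hC : 0 ≤ C₀ := by
    have := (abs_nonneg _).trans (hK 0)
    simpa using this
  have hex : ∀ i, ∃ m : ℕ, i ∈ s → w i ∈ shell d m ∧ (m : ℝ) ≤ ‖t i‖ := fun i => by
    by_cases hi : i ∈ s
    · obtain ⟨m, h1, h2⟩ := exists_shell (hw0 i hi)
      exact ⟨m, fun _ => ⟨h1, h2 _ (ht i)⟩⟩
    · exact ⟨0, fun h => absurd h hi⟩
  choose g hg using hex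
  calc ∑ i ∈ s, |K (t i)|
      ≤ ∑ i ∈ s, C₀ / (1 + (g i : ℝ) ^ (d + 1)) := by
        refine Finset.sum_le_sum fun i hi => (hK _).trans ?_
        have := (hg i hi).2
        gcongr
    _ = ∑ m ∈ s.image g, (s.filter fun i => g i = m).card •
          (C₀ / (1 + (m : ℝ) ^ (d + 1))) :=
        Finset.sum_comp (fun m : ℕ => C₀ / (1 + (m : ℝ) ^ (d + 1))) g
    _ ≤ ∑ m ∈ s.image g, C₀ * 2 ^ d * d *
          (((m : ℝ) + 3 / 2) ^ (d - 1) / (1 + (m : ℝ) ^ (d + 1))) := by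
        refine Finset.sum_le_sum fun m _ => ?_
        have hcard : (s.filter fun i => g i = m).card ≤ (shell d m).card := by
          refine Finset.card_le_card_of_injOn w (fun i hi => ?_) hw.injOn
          obtain ⟨his, rfl⟩ := Finset.mem_filter.1 hi
          exact (hg i his).1
        have hcard' : ((s.filter fun i => g i = m).card : ℝ) ≤
            2 ^ d * d * ((m : ℝ) + 3 / 2) ^ (d - 1) :=
          (Nat.cast_le.2 hcard).trans (card_shell_le hd m)
        rw [nsmul_eq_mul]
        calc ((s.filter fun i => g i = m).card : ℝ) * (C₀ / (1 + (m : ℝ) ^ (d + 1)))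
            ≤ (2 ^ d * d * ((m : ℝ) + 3 / 2) ^ (d - 1)) * (C₀ / (1 + (m : ℝ) ^ (d + 1))) := by
              gcongr
          _ = _ := by ring
    _ ≤ _ := by
        rw [← Finset.mul_sum]
        refine mul_le_mul_of_nonneg_left ?_ (by positivity)
        exact (summable_series d hd).sum_le_tsum _ fun j _ => by positivity

/-- Schur test for quadratic forms. Both row and column sums are needed, as `A` need not be
symmetric. -/
lemma abs_quadForm_le {n : ℕ} (A : Fin n → Fin n → ℝ) (R : ℝ)
    (hrow : ∀ i, ∑ j, |A i j| ≤ R) (hcol : ∀ j, ∑ i, |A i j| ≤ R) (c : Fin n → ℝ) :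
    |∑ i, ∑ j, c i * c j * A i j| ≤ R * ∑ i, (c i) ^ 2 := by
  calc |∑ i, ∑ j, c i * c j * A i j|
      ≤ ∑ i, ∑ j, ((c i) ^ 2 / 2 * |A i j| + (c j) ^ 2 / 2 * |A i j|) := by
        refine (Finset.abs_sum_le_sum_abs _ _).trans (Finset.sum_le_sum fun i _ => ?_)
        refine (Finset.abs_sum_le_sum_abs _ _).trans (Finset.sum_le_sum fun j _ => ?_)
        rw [abs_mul, abs_mul, ← add_mul]
        refine mul_le_mul_of_nonneg_right ?_ (abs_nonneg _)
        nlinarith [sq_nonneg (|c i| - |c j|), sq_abs (c i), sq_abs (c j)]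
    _ = ∑ i, (c i) ^ 2 / 2 * ∑ j, |A i j| + ∑ j, (c j) ^ 2 / 2 * ∑ i, |A i j| := by
        simp only [Finset.sum_add_distrib, Finset.mul_sum]
        congr 1
        exact Finset.sum_comm
    _ ≤ ∑ i, (c i) ^ 2 / 2 * R + ∑ j, (c j) ^ 2 / 2 * R := by
        gcongr with i _ j _
        · exact hrow i
        · exact hcol j
    _ = R * ∑ i, (c i) ^ 2 := by
        rw [← Finset.sum_add_distrib, Finset.mul_sum]
        exact Finset.sum_congr rfl fun i _ => by ring

/-- Gershgorin-type upper bound: if `|K(t)| ≤ C₀/(1+‖t‖_∞^(d+1))`, the `vᵢ` are pairwise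
distinct in `ℤ^d`, `xᵢ ∈ [-1,1]^d` and `ε ∈ (-1/2,1/2)`, then for every `n` and `c ∈ ℝⁿ`,
`|Σᵢ Σⱼ cᵢ cⱼ K(vᵢ - vⱼ + ε(xᵢ - xⱼ))|
  ≤ (|K(0)| + C₀ 2^d d Σ_{j∈ℕ} (j+3/2)^(d-1)/(1+j^(d+1))) Σᵢ cᵢ²`. -/
theorem stmt6 (d : ℕ) (hd : 1 ≤ d) (K : (Fin d → ℝ) → ℝ) (C₀ : ℝ)
    (hK : ∀ t, |K t| ≤ C₀ / (1 + ‖t‖ ^ (d + 1)))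
    (ε : ℝ) (hε : ε ∈ Set.Ioo (-(1/2) : ℝ) (1/2))
    (n : ℕ) (v : Fin n → Fin d → ℤ) (hv : Function.Injective v)
    (x : Fin n → Fin d → ℝ) (hx : ∀ i k, x i k ∈ Set.Icc (-1 : ℝ) 1)
    (c : Fin n → ℝ) :
    |∑ i, ∑ j, c i * c j *
        K (fun k => ((v i k : ℝ) - (v j k : ℝ)) + ε * (x i k - x j k))|
      ≤ (|K 0| + C₀ * 2 ^ d * d *
            ∑' j : ℕ, ((j : ℝ) + 3 / 2) ^ (d - 1) / (1 + (j : ℝ) ^ (d + 1)))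
          * ∑ i, (c i) ^ 2 := by
  have hpert : ∀ i j k, |((v i k : ℝ) - (v j k : ℝ)) + ε * (x i k - x j k)
      - ((v i k - v j k : ℤ) : ℝ)| ≤ 1 := fun i j k => by
    have h1 : |ε| ≤ 1 / 2 := abs_le.2 ⟨hε.1.le, hε.2.le⟩
    have h2 : |x i k - x j k| ≤ 2 := by
      have := hx i k
      have := hx j k
      simp only [Set.mem_Icc] at *
      exact abs_le.2 ⟨by linarith, by linarith⟩
    push_cast
    rw [add_sub_cancel_left, abs_mul]
    calc |ε| * |x i k - x j k| ≤ 1 / 2 * 2 := by gcongr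
      _ = 1 := by norm_num
  refine abs_quadForm_le (fun i j =>
    K (fun k => ((v i k : ℝ) - (v j k : ℝ)) + ε * (x i k - x j k))) _ (fun i => ?_) (fun j => ?_) c
  · rw [← Finset.add_sum_erase _ _ (Finset.mem_univ i)]
    refine add_le_add (le_of_eq ?_) (sum_abs_le hd hK (Finset.univ.erase i)
      (fun j => v i - v j) (fun a b hab => hv (sub_right_injective hab))
      (fun j hj => sub_ne_zero.2 fun h => Finset.ne_of_mem_erase hj (hv h).symm)
      (fun j k => ((v i k : ℝ) - (v j k : ℝ)) + ε * (x i k - x j k)) fun j k => hpert i j k)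
    simp only [sub_self, mul_zero, add_zero]
    rfl
  · rw [← Finset.add_sum_erase _ _ (Finset.mem_univ j)]
    refine add_le_add (le_of_eq ?_) (sum_abs_le hd hK (Finset.univ.erase j)
      (fun i => v i - v j) (fun a b hab => hv (sub_left_injective hab))
      (fun i hi => sub_ne_zero.2 fun h => Finset.ne_of_mem_erase hi (hv h))
      (fun i k => ((v i k : ℝ) - (v j k : ℝ)) + ε * (x i k - x j k)) fun i k => hpert i j k)
    simp only [sub_self, mul_zero, add_zero]
    rfl
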